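/- arXiv:1404.1757 — 2 statements merged into one kernel-verified Lean document; each statement's English description precedes it below -/
import Mathlib

section
/- Let d ≥ 1 and let J be a Borel-fixed monomial ideal of k[x_0,…,x_n] all of whose minimal generators have degree at most d+1. Then the map T ↦ T·x_{n−1} is a bijection from the set {T : T is a monomial of degree d not divisible by x_n, T ∉ J, and T·x_{n−1}^k ∈ J for some k ≥ 1} onto ℳ_{n−1}(d+1, J); in particular these two finite sets have the same cardinality. (When J = Gin(I_X) is the reverse-lexicographic generic initial ideal of a (d+1)-regular subscheme X ⊆ P^n, the cardinality of the left-hand set equals h^1(I_{X/P^n}(d−1)); this is the generic-initial-ideal content of Proposition 3.3(a).) -/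
/-!
Write `p = n - 1`. If `T` is not divisible by `x_n` and `k + 1` is the least exponent with
`T * x_p ^ (k + 1) ∈ J`, then `T * x_p ^ (k + 1)` is already a minimal generator: were
`T * x_p ^ (k + 1) / x_ℓ` in `J`, then `ℓ ≤ p`, and replacing one `x_p` by `x_ℓ` (Borel property)
would put `T * x_p ^ k` in `J` (`isMinGen_of_first_power`). Its degree `d + k + 1` is at most
`d + 1` by hypothesis, so `k = 0` and `T * x_p` is a minimal generator with largest variable `x_p`.
Conversely, a minimal generator of degree `d + 1` with largest variable `x_p` is `T * x_p` with
`T ∉ J` of degree `d`, and `k = 1` witnesses the saturation condition. Injectivity is cancellation.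
-/

/-- The exponent vector of a monomial in the `N` variables `x_0, …, x_{N-1}`. -/
abbrev Mon (N : ℕ) : Type := Fin N → ℕ

/-- The total degree of a monomial. -/
def mdeg {N : ℕ} (m : Mon N) : ℕ := ∑ i, m i

/-- `mmax m` is the largest index `i` such that `x_i` divides `m` (`0` if `m = 1`). -/
def mmax {N : ℕ} (m : Mon N) : ℕ :=
  (Finset.univ.filter fun i : Fin N => 0 < m i).sup fun i => (i : ℕ)

/-- `J` is the set of monomials of a monomial ideal: membership is stable under
multiplication by arbitrary monomials. -/
def IsMonomialIdeal {N : ℕ} (J : Set (Mon N)) : Prop :=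
  ∀ m ∈ J, ∀ t : Mon N, m + t ∈ J

/-- Borel-fixed property (characteristic-zero combinatorial definition): if `m ∈ J`,
`x_i ∣ m` and `j ≤ i` then `(m / x_i) * x_j ∈ J`. -/
def IsBorelFixed {N : ℕ} (J : Set (Mon N)) : Prop :=
  ∀ (m : Mon N) (i j : Fin N), j ≤ i → m + Pi.single i 1 ∈ J → m + Pi.single j 1 ∈ J

/-- `m` is a minimal generator of the monomial ideal `J`. -/
def IsMinGen {N : ℕ} (J : Set (Mon N)) (m : Mon N) : Prop :=
  m ∈ J ∧ ∀ ℓ : Fin N, 0 < m ℓ → m - Pi.single ℓ 1 ∉ J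

/-- `𝒢(J)_d`: the set of minimal generators of `J` of degree `d`. -/
def minGens {N : ℕ} (J : Set (Mon N)) (d : ℕ) : Set (Mon N) :=
  {m | IsMinGen J m ∧ mdeg m = d}

/-- `ℳ_i(d, J)`: the set of minimal generators of `J` of degree `d` with `max = i`. -/
def Mset {N : ℕ} (J : Set (Mon N)) (d i : ℕ) : Set (Mon N) :=
  {m | IsMinGen J m ∧ mdeg m = d ∧ mmax m = i}

/-- `J ⊆ k[x_0, …, x_K]` is saturated with respect to the last variable `x_K`. -/
def IsSatLast {K : ℕ} (J : Set (Mon (K + 1))) : Prop :=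
  ∀ m : Mon (K + 1), m + Pi.single (Fin.last K) 1 ∈ J → m ∈ J

/-- The section ideal `J′ ⊆ k[x_0, …, x_{K-1}]` of `J ⊆ k[x_0, …, x_K]`, whose
monomials are the monomials `m` in `x_0, …, x_{K-1}` with `m * x_{K-1} ^ c ∈ J`
for some `c ≥ 0`. -/
def sectIdeal {K : ℕ} (J : Set (Mon (K + 1))) : Set (Mon K) :=
  {m | ∃ c : ℕ,
    (Fin.snoc m 0 : Mon (K + 1)) + Pi.single (⟨K - 1, by omega⟩ : Fin (K + 1)) c ∈ J}

/-- Auxiliary form of the section ideal, allowing a degenerate number of variables. -/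
def sectPred : {K : ℕ} → Set (Mon K) → Set (Mon (K - 1))
  | 0, J => J
  | _ + 1, J => sectIdeal J

/-- The iterated section ideal `J^(m) ⊆ k[x_0, …, x_{N-1-m}]`. -/
def iterSect {N : ℕ} (J : Set (Mon N)) : (m : ℕ) → Set (Mon (N - m))
  | 0 => J
  | m + 1 => sectPred (iterSect J m)

/-- If `T` involves only variables up to `x_p`, and `x_p ^ (k + 1)` but not `x_p ^ k`
multiplies `T` into the Borel-fixed `J`, then `T * x_p ^ (k + 1)` is a minimal generator. -/
lemma isMinGen_of_first_power {N : ℕ} {J : Set (Mon N)} (hB : IsBorelFixed J) (T : Mon N)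
    (p : Fin N) (hT : ∀ j, 0 < T j → j ≤ p) (k : ℕ)
    (hk : T + Pi.single p (k + 1) ∈ J) (hmin : T + Pi.single p k ∉ J) :
    IsMinGen J (T + Pi.single p (k + 1)) := by
  refine ⟨hk, fun ℓ hℓ hmem => hmin ?_⟩
  by_cases hℓp : ℓ = p
  · subst hℓp
    convert hmem using 1
    ext i
    by_cases hi : i = ℓ
    · subst hi; simp
    · simp [hi]
  · have hTℓ : 0 < T ℓ := by simpa [hℓp] using hℓ
    -- Trade one factor `x_p` of `T * x_p ^ (k + 1) / x_ℓ` for `x_ℓ`.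
    have h := hB (T - Pi.single ℓ 1 + Pi.single p k) p ℓ (hT ℓ hTℓ) (by
      convert hmem using 1
      ext i
      by_cases hi : i = ℓ
      · subst hi; simp [hℓp]
      · by_cases hip : i = p
        · subst hip; simp [hi]; omega
        · simp [hi, hip])
    convert h using 1
    ext i
    by_cases hi : i = ℓ
    · subst hi; simp [hℓp]; omega
    · simp [hi]

lemma mdeg_add_single {N : ℕ} (T : Mon N) (p : Fin N) (k : ℕ) :
    mdeg (T + Pi.single p k) = mdeg T + k := by
  simp [mdeg, Finset.sum_add_distrib]

lemma le_mmax {N : ℕ} (m : Mon N) (i : Fin N) (hi : 0 < m i) : (i : ℕ) ≤ mmax m :=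
  Finset.le_sup (f := fun i : Fin N => (i : ℕ)) (by simpa using hi)

/-- A monomial other than `1` is divisible by the variable of index `mmax`. -/
lemma exists_eq_mmax {N : ℕ} (m : Mon N) (hm : 0 < mdeg m) :
    ∃ i : Fin N, 0 < m i ∧ (i : ℕ) = mmax m := by
  have hne : (Finset.univ.filter fun i : Fin N => 0 < m i).Nonempty := by
    obtain ⟨i, -, hi⟩ := Finset.sum_pos_iff.mp hm
    exact ⟨i, by simpa using hi⟩
  obtain ⟨i, hi, h⟩ := Finset.exists_mem_eq_sup _ hne (fun i : Fin N => (i : ℕ))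
  exact ⟨i, by simpa using hi, h.symm⟩

/-- Proposition 3.3 (a), generic-initial-ideal form. Let `J` be
Borel-fixed with all minimal generators of degree `≤ d + 1` (`d ≥ 1`). Then
`T ↦ T * x_{n-1}` is a bijection from the set of degree-`d` monomials `T ∉ J` not
divisible by `x_n` with `T * x_{n-1}^k ∈ J` for some `k ≥ 1` onto `ℳ_{n-1}(d+1, J)`;
in particular the two sets have the same cardinality. -/
theorem stmt5 {n : ℕ} (hn : 1 ≤ n) (J : Set (Mon (n + 1)))
    (hJ : IsMonomialIdeal J) (hB : IsBorelFixed J)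
    (d : ℕ) (hd : 1 ≤ d)
    (hgen : ∀ m : Mon (n + 1), IsMinGen J m → mdeg m ≤ d + 1) :
    Set.BijOn (fun T : Mon (n + 1) => T + Pi.single (⟨n - 1, by omega⟩ : Fin (n + 1)) 1)
      {T : Mon (n + 1) | mdeg T = d ∧ T (Fin.last n) = 0 ∧ T ∉ J ∧
        ∃ k : ℕ, 1 ≤ k ∧ T + Pi.single (⟨n - 1, by omega⟩ : Fin (n + 1)) k ∈ J}
      (Mset J (d + 1) (n - 1)) ∧
    {T : Mon (n + 1) | mdeg T = d ∧ T (Fin.last n) = 0 ∧ T ∉ J ∧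
        ∃ k : ℕ, 1 ≤ k ∧ T + Pi.single (⟨n - 1, by omega⟩ : Fin (n + 1)) k ∈ J}.ncard
      = (Mset J (d + 1) (n - 1)).ncard := by
  have hbij : Set.BijOn (fun T : Mon (n + 1) => T + Pi.single (⟨n - 1, by omega⟩ : Fin (n + 1)) 1)
      {T : Mon (n + 1) | mdeg T = d ∧ T (Fin.last n) = 0 ∧ T ∉ J ∧
        ∃ k : ℕ, 1 ≤ k ∧ T + Pi.single (⟨n - 1, by omega⟩ : Fin (n + 1)) k ∈ J}
      (Mset J (d + 1) (n - 1)) := by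
    generalize hp : (⟨n - 1, by omega⟩ : Fin (n + 1)) = p
    have hpv : (p : ℕ) = n - 1 := by rw [← hp]
    refine ⟨?_, fun a _ b _ h => add_right_cancel h, ?_⟩
    · rintro T ⟨hdeg, hlast, hTJ, hex⟩
      have hsupp : ∀ j, 0 < T j → j ≤ p := by
        intro j hj
        have hne : j ≠ Fin.last n := by rintro rfl; omega
        have := Fin.val_lt_last hne
        exact Fin.le_def.mpr (by omega)
      classical
      have hex' : ∃ k : ℕ, T + Pi.single p k ∈ J := hex.imp fun _ h => h.2
      obtain ⟨k, hk⟩ : ∃ k, Nat.find hex' = k + 1 := by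
        refine Nat.exists_eq_succ_of_ne_zero fun h0 => hTJ ?_
        have := Nat.find_spec hex'
        rw [h0] at this
        simpa using this
      have hmg := isMinGen_of_first_power hB T p hsupp k (hk ▸ Nat.find_spec hex')
        (Nat.find_min hex' (by omega))
      have hle := hgen _ hmg
      rw [mdeg_add_single] at hle
      obtain rfl : k = 0 := by omega
      refine ⟨hmg, by simp [mdeg_add_single, hdeg], le_antisymm ?_ ?_⟩
      · refine Finset.sup_le fun i hi => ?_
        rw [← hpv]
        by_cases hip : i = p
        · rw [hip]
        · exact hsupp i (by simpa [hip] using hi)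
      · rw [← hpv]
        exact le_mmax _ p (by simp)
    · rintro m ⟨hmg, hdeg, hmax⟩
      obtain ⟨i, hi, him⟩ := exists_eq_mmax m (by omega)
      obtain rfl : i = p := Fin.ext (by omega)
      have hm : m - Pi.single i 1 + Pi.single i 1 = m := by
        ext j
        by_cases hj : j = i
        · subst hj; simp; omega
        · simp [hj]
      refine ⟨m - Pi.single i 1, ⟨?_, ?_, hmg.2 i hi, 1, le_rfl, hm.symm ▸ hmg.1⟩, hm⟩
      · have := mdeg_add_single (m - Pi.single i 1) i 1
        rw [hm] at this
        omega
      · have h0 : m (Fin.last n) = 0 := by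
          by_contra h
          have := le_mmax m (Fin.last n) (Nat.pos_of_ne_zero h)
          rw [hmax, Fin.val_last] at this
          omega
        simp [h0]
  refine ⟨hbij, ?_⟩
  rw [← hbij.image_eq, hbij.injOn.ncard_image]
end

section
/- Let J be a Borel-fixed monomial ideal of k[x_0,…,x_n] which is x_n-saturated, contains no monomial of degree ≤ 1, and all of whose minimal generators have degree at most 3. Let J′ ⊆ k[x_0,…,x_{n−1}] be its section ideal and assume J′ also contains no monomial of degree ≤ 1. Write ℳ_{n−1}(3,J) = {T_1·x_{n−1},…,T_r·x_{n−1}} with pairwise distinct degree-2 monomials T_1,…,T_r. Then 𝒢(J′)_2 is the disjoint union of 𝒢(J)_2 and {T_1,…,T_r}. -/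
theorem mdeg_add {N : ℕ} (a b : Mon N) : mdeg (a + b) = mdeg a + mdeg b := by
  simp [mdeg, Finset.sum_add_distrib]

theorem mdeg_single {N : ℕ} (i : Fin N) (c : ℕ) : mdeg (Pi.single i c : Mon N) = c := by
  simp [mdeg]

theorem sub_add_single {N : ℕ} (m : Mon N) (i : Fin N) (h : 0 < m i) :
    m - Pi.single i 1 + Pi.single i 1 = m := by
  funext j
  by_cases hj : j = i
  · subst hj
    simp only [Pi.add_apply, Pi.sub_apply, Pi.single_eq_same]
    omega
  · simp [hj]

theorem mdeg_snoc {K : ℕ} (m : Mon K) : mdeg (Fin.snoc m 0 : Mon (K + 1)) = mdeg m := by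
  simp [mdeg, Fin.sum_univ_castSucc]

/-- If an ideal has no monomial of degree `≤ 1`, its degree-2 monomials are minimal generators. -/
theorem isMinGen_of_deg_two {N : ℕ} {J : Set (Mon N)} (h1 : ∀ T ∈ J, ¬ mdeg T ≤ 1)
    {m : Mon N} (hm : m ∈ J) (hd : mdeg m = 2) : IsMinGen J m := by
  refine ⟨hm, fun ℓ hℓ hmem => h1 _ hmem ?_⟩
  have h := congrArg mdeg (sub_add_single m ℓ hℓ)
  rw [mdeg_add, mdeg_single] at h
  omega

theorem IsMinGen.last_eq_zero {K : ℕ} {J : Set (Mon (K + 1))} (hsat : IsSatLast J)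
    {m : Mon (K + 1)} (hm : IsMinGen J m) : m (Fin.last K) = 0 := by
  by_contra h
  have h := Nat.pos_of_ne_zero h
  refine hm.2 _ h (hsat _ ?_)
  rw [sub_add_single m _ h]
  exact hm.1

theorem snoc_init_of_last_eq_zero {K : ℕ} {m : Mon (K + 1)} (h : m (Fin.last K) = 0) :
    (Fin.snoc (Fin.init m : Mon K) 0 : Mon (K + 1)) = m := by
  rw [← h]
  exact Fin.snoc_init_self m

/-- The key Borel-fixedness step: let `p x_y ∈ J` with `p ∉ J`, where no variable of index
greater than `y` divides `p`. Then `p x_y` is a minimal generator of `J`. -/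
theorem isMinGen_add_single {N : ℕ} {J : Set (Mon N)} (hB : IsBorelFixed J)
    {p : Mon N} {y : Fin N} (hp : p ∉ J) (hpy : p + Pi.single y 1 ∈ J)
    (hmax : ∀ ℓ, 0 < p ℓ → ℓ ≤ y) : IsMinGen J (p + Pi.single y 1) := by
  refine ⟨hpy, fun ℓ hℓ hmem => hp ?_⟩
  by_cases hly : ℓ = y
  · subst hly
    rwa [add_tsub_cancel_right] at hmem
  · have hpl : 0 < p ℓ := by simpa [hly] using hℓ
    have e : p + Pi.single y 1 - Pi.single ℓ 1 = p - Pi.single ℓ 1 + Pi.single y 1 := by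
      conv_lhs => rw [← sub_add_single p ℓ hpl, add_right_comm]
      exact add_tsub_cancel_right _ _
    rw [e] at hmem
    have := hB _ y ℓ (hmax ℓ hpl) hmem
    rwa [sub_add_single p ℓ hpl] at this

theorem mmax_add_single {N : ℕ} {p : Mon N} {y : Fin N} (hmax : ∀ ℓ, 0 < p ℓ → ℓ ≤ y) :
    mmax (p + Pi.single y 1) = y := by
  apply le_antisymm
  · refine Finset.sup_le fun i hi => ?_
    by_cases hiy : i = y
    · rw [hiy]
    · exact hmax i (by simpa [hiy] using hi)
  · exact Finset.le_sup (f := fun i : Fin N => (i : ℕ)) (by simp)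

/-- Proposition 3.6 (c), generic-initial-ideal form, degree-2 level.
Let `J ⊆ k[x_0, …, x_n]` be Borel-fixed, `x_n`-saturated, with no monomial of degree
`≤ 1` and all minimal generators of degree `≤ 3`; assume the section ideal
`J′ ⊆ k[x_0, …, x_{n-1}]` also has no monomial of degree `≤ 1`. Writing
`ℳ_{n-1}(3, J) = {T_1 x_{n-1}, …, T_r x_{n-1}}` with pairwise distinct degree-2
monomials `T_a`, the set `𝒢(J′)_2` (viewed inside `k[x_0, …, x_n]`) is the disjoint
union of `𝒢(J)_2` and `{T_1, …, T_r}`. -/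
theorem stmt9 {n : ℕ} (hn : 1 ≤ n) (J : Set (Mon (n + 1)))
    (hJ : IsMonomialIdeal J) (hB : IsBorelFixed J) (hsat : IsSatLast J)
    (hJ1 : ∀ T ∈ J, ¬ mdeg T ≤ 1)
    (hgen : ∀ m : Mon (n + 1), IsMinGen J m → mdeg m ≤ 3)
    (hJ'1 : ∀ T ∈ sectIdeal J, ¬ mdeg T ≤ 1)
    (r : ℕ) (T : Fin r → Mon (n + 1)) (hTinj : Function.Injective T)
    (hTdeg : ∀ a : Fin r, mdeg (T a) = 2)
    (hM : Mset J 3 (n - 1)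
      = Set.range fun a : Fin r =>
          T a + Pi.single (⟨n - 1, by omega⟩ : Fin (n + 1)) 1) :
    (fun m : Mon n => (Fin.snoc m 0 : Mon (n + 1))) '' minGens (sectIdeal J) 2
        = minGens J 2 ∪ Set.range T ∧
      minGens J 2 ∩ Set.range T = ∅ := by
  set y : Fin (n + 1) := ⟨n - 1, by omega⟩ with hy
  have hT (a : Fin r) : T a + Pi.single y 1 ∈ Mset J 3 (n - 1) := by
    rw [hM]
    exact ⟨a, rfl⟩
  have hdisj (a : Fin r) : T a ∉ J := by
    have h := (hT a).1.2 y (by simp)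
    rwa [add_tsub_cancel_right] at h
  refine ⟨Set.Subset.antisymm ?_ ?_, ?_⟩
  · rintro _ ⟨m, ⟨⟨hm, -⟩, hd⟩, rfl⟩
    change (Fin.snoc m 0 : Mon (n + 1)) ∈ _
    have hdM := mdeg_snoc m
    have hlast : (Fin.snoc m 0 : Mon (n + 1)) (Fin.last n) = 0 := by simp
    have hex : ∃ c : ℕ, (Fin.snoc m 0 : Mon (n + 1)) + Pi.single y c ∈ J := hm
    generalize (Fin.snoc m 0 : Mon (n + 1)) = M at hdM hlast hex
    classical
    have hc := Nat.find_spec hex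
    have hmin := fun k => @Nat.find_min _ _ hex k
    generalize Nat.find hex = c at hc hmin
    rcases c with _ | c
    · left
      rw [Pi.single_zero, add_zero] at hc
      exact ⟨isMinGen_of_deg_two hJ1 hc (by omega), by omega⟩
    · right
      have hnot : M + Pi.single y c ∉ J := hmin c (Nat.lt_succ_self c)
      have hmax : ∀ ℓ, 0 < (M + Pi.single y c : Mon (n + 1)) ℓ → ℓ ≤ y := by
        intro ℓ hℓ
        by_cases hly : ℓ = y
        · exact hly.le
        · have hMl : 0 < M ℓ := by simpa [hly] using hℓ
          have hne : ℓ ≠ Fin.last n := by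
            rintro rfl
            omega
          have := Fin.val_lt_last hne
          rw [Fin.le_def]
          simp only [hy]
          omega
      rw [Pi.single_add, ← add_assoc] at hc
      have hg := isMinGen_add_single hB hnot hc hmax
      have h3 := hgen _ hg
      have hdeg : mdeg (M + Pi.single y c + Pi.single y 1) = 2 + c + 1 := by
        rw [mdeg_add, mdeg_add, mdeg_single, mdeg_single]
        omega
      obtain rfl : c = 0 := by omega
      have hmem : M + Pi.single y 0 + Pi.single y 1 ∈ Mset J 3 (n - 1) :=
        ⟨hg, by omega, mmax_add_single hmax⟩
      rw [hM, Pi.single_zero, add_zero] at hmem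
      obtain ⟨a, ha⟩ := hmem
      exact ⟨a, add_right_cancel ha⟩
  · have key (M : Mon (n + 1)) (c : ℕ) (hd : mdeg M = 2) (hl : M (Fin.last n) = 0)
        (hc : M + Pi.single y c ∈ J) :
        M ∈ (fun m : Mon n => (Fin.snoc m 0 : Mon (n + 1))) '' minGens (sectIdeal J) 2 := by
      have e := snoc_init_of_last_eq_zero hl
      have hs : (Fin.init M : Mon n) ∈ sectIdeal J := ⟨c, by rw [e]; exact hc⟩
      have hd' : mdeg (Fin.init M : Mon n) = 2 := by rw [← mdeg_snoc, e, hd]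
      exact ⟨_, ⟨isMinGen_of_deg_two hJ'1 hs hd', hd'⟩, e⟩
    rintro M (⟨hg, hd⟩ | ⟨a, rfl⟩)
    · exact key M 0 hd (hg.last_eq_zero hsat) (by simpa using hg.1)
    · refine key (T a) 1 (hTdeg a) ?_ (hT a).1.1
      have h := (hT a).1.last_eq_zero hsat
      rw [Pi.add_apply] at h
      omega
  · rw [Set.eq_empty_iff_forall_notMem]
    rintro _ ⟨⟨hg, -⟩, a, rfl⟩
    exact hdisj a hg.1
end
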